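/- Let ι be a nonempty finite index type, and let Q, (X_i)_{i ∈ ι}, and Y be jointly distributed random variables on finite types with joint pmf p. If H(Q|X_i) = 0 for every i ∈ ι, then I(Q:Y) ≤ ∑_y p_Y(y) * min_{i ∈ ι} I(X_i:y), where the sum ranges over y with p_Y(y) > 0. (That is, I_∧ ≤ I_min.) -/

import Mathlib

open Real Finset

/- STATEMENT 7: If `H(Q|X i) = 0` for every `i`, then
`I(Q:Y) ≤ ∑_y p_Y(y) * min_i I(X i : y)`, i.e. `I_∧ ≤ I_min`.
The joint pmf is `p : Q × (∀ i, X i) × Y → ℝ`. -/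

section Defs

variable {Q : Type*} [Fintype Q] {ι : Type*} [Fintype ι] [DecidableEq ι]
  {X : ι → Type*} [∀ i, Fintype (X i)] [∀ i, DecidableEq (X i)]
  {Y : Type*} [Fintype Y]

/-- Marginal of `Y`. -/
noncomputable def margY (p : Q × (∀ i, X i) × Y → ℝ) (y : Y) : ℝ :=
  ∑ q, ∑ x, p (q, x, y)

/-- Marginal of `Q`. -/
noncomputable def margQ (p : Q × (∀ i, X i) × Y → ℝ) (q : Q) : ℝ :=
  ∑ x, ∑ y, p (q, x, y)

/-- Marginal of `(Q, Y)`. -/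
noncomputable def margQY (p : Q × (∀ i, X i) × Y → ℝ) (q : Q) (y : Y) : ℝ :=
  ∑ x, p (q, x, y)

/-- Marginal of the predictor `X i`. -/
noncomputable def margXi (p : Q × (∀ i, X i) × Y → ℝ) (i : ι) (u : X i) : ℝ :=
  ∑ q, ∑ x, ∑ y, if x i = u then p (q, x, y) else 0

/-- Marginal of `(X i, Y)`. -/
noncomputable def margXiY (p : Q × (∀ i, X i) × Y → ℝ) (i : ι) (u : X i) (y : Y) : ℝ :=
  ∑ q, ∑ x, if x i = u then p (q, x, y) else 0

/-- Marginal of `(Q, X i)`. -/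
noncomputable def margQXi (p : Q × (∀ i, X i) × Y → ℝ) (q : Q) (i : ι) (u : X i) : ℝ :=
  ∑ x, ∑ y, if x i = u then p (q, x, y) else 0

/-- Marginal of `(Q, X i, Y)`. -/
noncomputable def margQXiY (p : Q × (∀ i, X i) × Y → ℝ) (q : Q) (i : ι) (u : X i) (y : Y) : ℝ :=
  ∑ x, if x i = u then p (q, x, y) else 0

/-- Mutual information `I(Q:Y)`. -/
noncomputable def miQY (p : Q × (∀ i, X i) × Y → ℝ) : ℝ :=
  ∑ q, ∑ y, margQY p q y * logb 2 (margQY p q y / (margQ p q * margY p y))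

/-- Conditional mutual information `I(Q:Y|X i)`. -/
noncomputable def condMIQYXi (p : Q × (∀ i, X i) × Y → ℝ) (i : ι) : ℝ :=
  ∑ q, ∑ u : X i, ∑ y,
    margQXiY p q i u y *
      logb 2 (margQXiY p q i u y * margXi p i u / (margQXi p q i u * margXiY p i u y))

/-- Conditional entropy `H(Q|X i)`. -/
noncomputable def condEntQXi (p : Q × (∀ i, X i) × Y → ℝ) (i : ι) : ℝ :=
  -∑ q, ∑ u : X i, margQXi p q i u * logb 2 (margQXi p q i u / margXi p i u)

/-- Specific information `I(X i : y)` of the predictor `X i` about the state `y`. -/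
noncomputable def specInfoXi (p : Q × (∀ i, X i) × Y → ℝ) (i : ι) (y : Y) : ℝ :=
  ∑ u, (margXiY p i u y / margY p y) * logb 2 ((margXiY p i u y / margY p y) / margXi p i u)

end Defs

/-! `H(Q|X i) = 0` makes `Q` almost surely a function of `X i`, so for each state `y` the events
`Q = q` coarsen the events `X i = u`. The log-sum inequality over the values `u` lying above `q`
gives `I(Q:y) ≤ I(X i : y)`, for every `i` and hence for the minimum. Averaging over `y` turns the
left side into `I(Q:Y)`. -/

section LogSum

variable {α β : Type*}

theorem sum_mul_log_div_sum_le (s : Finset α) {f g : α → ℝ} (hf : ∀ a ∈ s, 0 ≤ f a)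
    (hg : ∀ a ∈ s, 0 ≤ g a) (hfg : ∀ a ∈ s, g a = 0 → f a = 0) :
    (∑ a ∈ s, f a) * log ((∑ a ∈ s, f a) / ∑ a ∈ s, g a) ≤
      ∑ a ∈ s, f a * log (f a / g a) := by
  obtain hG | hG := (sum_nonneg hg).eq_or_lt
  · have hf0 : ∀ a ∈ s, f a = 0 := fun a ha ↦
      hfg a ha ((sum_eq_zero_iff_of_nonneg hg).mp hG.symm a ha)
    rw [sum_eq_zero hf0, zero_mul]
    exact (sum_eq_zero fun a ha ↦ by rw [hf0 a ha, zero_mul]).ge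
  -- Jensen for `x ↦ x * log x` at the points `f a / g a` with weights `g a / ∑ g`.
  have weight_mul (a : α) (ha : a ∈ s) :
      g a / (∑ a ∈ s, g a) * (f a / g a) = f a / ∑ a ∈ s, g a := by
    rw [div_mul_eq_mul_div, mul_div_cancel_of_imp' (hfg a ha)]
  have jensen := convexOn_mul_log.map_sum_le (t := s) (w := fun a ↦ g a / ∑ a ∈ s, g a)
    (p := fun a ↦ f a / g a) (fun a ha ↦ div_nonneg (hg a ha) hG.le)
    (by rw [← sum_div, div_self hG.ne']) (fun a ha ↦ div_nonneg (hf a ha) (hg a ha))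
  simp only [smul_eq_mul, ← mul_assoc] at jensen
  rw [sum_congr rfl weight_mul, ← sum_div,
    sum_congr rfl fun a ha ↦ congrArg (· * log (f a / g a)) (weight_mul a ha)] at jensen
  simpa only [div_mul_eq_mul_div, ← sum_div, div_le_div_iff_of_pos_right hG] using jensen

theorem sum_mul_logb_div_sum_le {b : ℝ} (hb : 1 < b) (s : Finset α) {f g : α → ℝ}
    (hf : ∀ a ∈ s, 0 ≤ f a) (hg : ∀ a ∈ s, 0 ≤ g a) (hfg : ∀ a ∈ s, g a = 0 → f a = 0) :
    (∑ a ∈ s, f a) * logb b ((∑ a ∈ s, f a) / ∑ a ∈ s, g a) ≤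
      ∑ a ∈ s, f a * logb b (f a / g a) := by
  simpa only [logb, ← mul_div_assoc, ← sum_div] using
    div_le_div_of_nonneg_right (sum_mul_log_div_sum_le s hf hg hfg) (log_pos hb).le

variable [Fintype α]

theorem sum_mul_logb_div_eq_of_support_subsingleton (b : ℝ) {f g : α → ℝ}
    (hfg : ∀ a, g a = 0 → f a = 0) (hg : (Function.support g).Subsingleton) :
    ∑ a, f a * logb b (f a / g a) = (∑ a, f a) * logb b ((∑ a, f a) / ∑ a, g a) := by
  rw [sum_mul]
  refine sum_congr rfl fun a _ ↦ ?_
  obtain hfa | hfa := eq_or_ne (f a) 0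
  · rw [hfa, zero_mul, zero_mul]
  have hg_ne (a' : α) (ha' : a' ≠ a) : g a' = 0 := by
    by_contra hga'
    exact ha' (hg hga' (mt (hfg a) hfa))
  rw [Fintype.sum_eq_single a hg_ne, Fintype.sum_eq_single a fun a' ha' ↦ hfg a' (hg_ne a' ha')]

variable [Fintype β] {b : ℝ}

theorem sum_mul_logb_div_row_le_column (hb : 1 < b) {f g : α → β → ℝ} (hf : ∀ a c, 0 ≤ f a c)
    (hg : ∀ a c, 0 ≤ g a c) (hfg : ∀ a c, g a c = 0 → f a c = 0)
    (hsupp : ∀ c, (Function.support fun a ↦ g a c).Subsingleton) :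
    ∑ a, (∑ c, f a c) * logb b ((∑ c, f a c) / ∑ c, g a c) ≤
      ∑ c, (∑ a, f a c) * logb b ((∑ a, f a c) / ∑ a, g a c) :=
  calc
    _ ≤ ∑ a, ∑ c, f a c * logb b (f a c / g a c) := sum_le_sum fun a _ ↦
      sum_mul_logb_div_sum_le hb univ (fun c _ ↦ hf a c) (fun c _ ↦ hg a c) fun c _ ↦ hfg a c
    _ = ∑ c, ∑ a, f a c * logb b (f a c / g a c) := sum_comm
    _ = _ := sum_congr rfl fun c _ ↦
      sum_mul_logb_div_eq_of_support_subsingleton b (fun a ↦ hfg a c) (hsupp c)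

theorem support_subsingleton_of_sum_mul_logb_div_sum_eq_zero (hb : 1 < b) {w : α → β → ℝ}
    (hw : ∀ a c, 0 ≤ w a c)
    (hsum : ∑ a, ∑ c, w a c * logb b (w a c / ∑ a', w a' c) = 0) (c : β) :
    (Function.support fun a ↦ w a c).Subsingleton := by
  have le_total (a : α) (c : β) : w a c ≤ ∑ a', w a' c :=
    single_le_sum (fun a' _ ↦ hw a' c) (mem_univ a)
  have term_nonpos (a : α) (c : β) : w a c * logb b (w a c / ∑ a', w a' c) ≤ 0 :=
    mul_nonpos_of_nonneg_of_nonpos (hw a c) <|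
      logb_nonpos hb (div_nonneg (hw a c) ((hw a c).trans (le_total a c)))
        (div_le_one_of_le₀ (le_total a c) ((hw a c).trans (le_total a c)))
  have term_eq_zero (a : α) : w a c * logb b (w a c / ∑ a', w a' c) = 0 := by
    have row_eq_zero := (sum_eq_zero_iff_of_nonpos fun a _ ↦
      sum_nonpos fun c _ ↦ term_nonpos a c).mp hsum a (mem_univ a)
    exact (sum_eq_zero_iff_of_nonpos fun c _ ↦ term_nonpos a c).mp row_eq_zero c (mem_univ c)
  have eq_total (a : α) (ha : w a c ≠ 0) : w a c = ∑ a', w a' c := by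
    have hpos : 0 < w a c := (hw a c).lt_of_ne' ha
    have htotal : 0 < ∑ a', w a' c := hpos.trans_le (le_total a c)
    have hlog := (mul_eq_zero.mp (term_eq_zero a)).resolve_left ha
    exact (div_eq_one_iff_eq htotal.ne').mp
      (eq_one_of_pos_of_logb_eq_zero hb (div_pos hpos htotal) hlog)
  intro a ha a' ha'
  by_contra hne
  have pair_le := add_le_sum (fun d _ ↦ hw d c) (mem_univ a) (mem_univ a') hne
  rw [← eq_total a ha] at pair_le
  exact ha' (le_antisymm (by linarith) (hw a' c))

end LogSum

section Marginals

variable {Q : Type*} {ι : Type*} [Fintype ι] [DecidableEq ι] {X : ι → Type*} [∀ i, Fintype (X i)]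
  {Y : Type*} {p : Q × (∀ i, X i) × Y → ℝ}

theorem margQY_nonneg (hp : ∀ a, 0 ≤ p a) (q : Q) (y : Y) : 0 ≤ margQY p q y :=
  sum_nonneg fun _ _ ↦ hp _

section Predictor

variable [∀ i, DecidableEq (X i)]

theorem margQXiY_nonneg (hp : ∀ a, 0 ≤ p a) (q : Q) (i : ι) (u : X i) (y : Y) :
    0 ≤ margQXiY p q i u y :=
  sum_nonneg fun x _ ↦ ite_nonneg (hp (q, x, y)) le_rfl

theorem margQY_eq_sum_margQXiY (p : Q × (∀ i, X i) × Y → ℝ) (q : Q) (i : ι) (y : Y) :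
    margQY p q y = ∑ u : X i, margQXiY p q i u y := by
  simp only [margQY, margQXiY]
  rw [sum_comm]
  simp only [sum_ite_eq, mem_univ, if_true]

variable [Fintype Y]

theorem margQXi_eq_sum_margQXiY (p : Q × (∀ i, X i) × Y → ℝ) (q : Q) (i : ι) (u : X i) :
    margQXi p q i u = ∑ y, margQXiY p q i u y :=
  sum_comm

theorem margQ_eq_sum_margQXi (p : Q × (∀ i, X i) × Y → ℝ) (q : Q) (i : ι) :
    margQ p q = ∑ u : X i, margQXi p q i u := by
  simp only [margQXi_eq_sum_margQXiY]
  rw [sum_comm]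
  simp only [← margQY_eq_sum_margQXiY]
  exact sum_comm

theorem margQXi_nonneg (hp : ∀ a, 0 ≤ p a) (q : Q) (i : ι) (u : X i) : 0 ≤ margQXi p q i u := by
  rw [margQXi_eq_sum_margQXiY]
  exact sum_nonneg fun y _ ↦ margQXiY_nonneg hp q i u y

theorem margQXiY_eq_zero_of_margQXi_eq_zero (hp : ∀ a, 0 ≤ p a) {q : Q} {i : ι} {u : X i}
    (hu : margQXi p q i u = 0) (y : Y) : margQXiY p q i u y = 0 := by
  rw [margQXi_eq_sum_margQXiY] at hu
  exact (sum_eq_zero_iff_of_nonneg fun y _ ↦ margQXiY_nonneg hp q i u y).mp hu y (mem_univ y)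

end Predictor

variable [Fintype Q]

theorem margY_nonneg (hp : ∀ a, 0 ≤ p a) (y : Y) : 0 ≤ margY p y :=
  sum_nonneg fun q _ ↦ margQY_nonneg hp q y

theorem margQY_eq_zero_of_margY_eq_zero (hp : ∀ a, 0 ≤ p a) {y : Y} (hy : margY p y = 0) (q : Q) :
    margQY p q y = 0 :=
  (sum_eq_zero_iff_of_nonneg fun q _ ↦ margQY_nonneg hp q y).mp hy q (mem_univ q)

variable [Fintype Y]

/-- Specific information `I(Q:y)` of `Q` about the state `y`, the counterpart for `Q` of
`specInfoXi`. As there, division by zero makes it `0` when `margY p y = 0`. -/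
noncomputable def specInfoQ (p : Q × (∀ i, X i) × Y → ℝ) (y : Y) : ℝ :=
  ∑ q, (margQY p q y / margY p y) * logb 2 ((margQY p q y / margY p y) / margQ p q)

theorem miQY_eq_sum_margY_mul_specInfoQ (hp : ∀ a, 0 ≤ p a) :
    miQY p = ∑ y, margY p y * specInfoQ p y := by
  rw [miQY, sum_comm]
  refine sum_congr rfl fun y _ ↦ ?_
  rw [specInfoQ, mul_sum]
  refine sum_congr rfl fun q _ ↦ ?_
  rw [← mul_assoc, mul_div_cancel_of_imp' fun hy ↦ margQY_eq_zero_of_margY_eq_zero hp hy q,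
    div_div, mul_comm (margY p y)]

variable [∀ i, DecidableEq (X i)]

theorem support_margQXi_subsingleton_of_condEntQXi_eq_zero (hp : ∀ a, 0 ≤ p a) {i : ι}
    (hi : condEntQXi p i = 0) (u : X i) :
    (Function.support fun q ↦ margQXi p q i u).Subsingleton :=
  support_subsingleton_of_sum_mul_logb_div_sum_eq_zero one_lt_two
    (fun q u ↦ margQXi_nonneg hp q i u) (neg_eq_zero.mp hi) u

theorem specInfoQ_le_specInfoXi (hp : ∀ a, 0 ≤ p a) {i : ι} (hi : condEntQXi p i = 0) (y : Y) :
    specInfoQ p y ≤ specInfoXi p i y := by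
  have row_le_column := sum_mul_logb_div_row_le_column one_lt_two
    (f := fun q u ↦ margQXiY p q i u y / margY p y) (g := fun q u ↦ margQXi p q i u)
    (fun q u ↦ div_nonneg (margQXiY_nonneg hp q i u y) (margY_nonneg hp y))
    (fun q u ↦ margQXi_nonneg hp q i u)
    (fun q u hu ↦ by rw [margQXiY_eq_zero_of_margQXi_eq_zero hp hu, zero_div])
    (support_margQXi_subsingleton_of_condEntQXi_eq_zero hp hi)
  simp only [← sum_div, ← margQY_eq_sum_margQXiY, ← margQ_eq_sum_margQXi] at row_le_column
  exact row_le_column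

end Marginals

theorem stmt_7 {Q : Type*} [Fintype Q] {ι : Type*} [Fintype ι] [DecidableEq ι] [Nonempty ι]
    {X : ι → Type*} [∀ i, Fintype (X i)] [∀ i, DecidableEq (X i)]
    {Y : Type*} [Fintype Y]
    (p : Q × (∀ i, X i) × Y → ℝ)
    (hnn : ∀ a, 0 ≤ p a)
    (hsum : ∑ a, p a = 1)
    (hdet : ∀ i, condEntQXi p i = 0) :
    miQY p ≤
      ∑ y ∈ univ.filter (fun y => 0 < margY p y),
        margY p y * univ.inf' univ_nonempty (fun i => specInfoXi p i y) := by
  have pos_of_ne_zero (y : Y) (_ : y ∈ univ) (hy : margY p y * specInfoQ p y ≠ 0) :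
      0 < margY p y :=
    (margY_nonneg hnn y).lt_of_ne' (left_ne_zero_of_mul hy)
  calc
    miQY p = ∑ y, margY p y * specInfoQ p y := miQY_eq_sum_margY_mul_specInfoQ hnn
    _ = ∑ y ∈ univ.filter (fun y => 0 < margY p y), margY p y * specInfoQ p y :=
      (sum_filter_of_ne pos_of_ne_zero).symm
    _ ≤ _ := sum_le_sum fun y _ ↦ mul_le_mul_of_nonneg_left
      (le_inf' _ _ fun i _ ↦ specInfoQ_le_specInfoXi hnn (hdet i) y) (margY_nonneg hnn y)
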